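/- Let E be a real normed vector space, m ≥ 1, and let f : E → (Fin m → ℝ) be a classifier with m logits. Let ε ≥ 0 and let K : Fin m → ℝ, K_i ≥ 0, be such that for every class i, the i-th logit x ↦ f(x)_i is Lipschitz with constant K_i. Suppose that at a point x ∈ E the class j satisfies the GloRo certification condition with radius ε: for every i ≠ j, f(x)_j > f(x)_i + (K_i + K_j)·ε. Then for every x' ∈ E with ‖x − x'‖ ≤ ε and every i ≠ j, f(x')_j > f(x')_i; in particular the strict-argmax prediction of f equals j at every point of the closed ε-ball around x, i.e. the prediction is ε-locally-robust at x. (Theorem 1 of the paper.) -/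

import Mathlib

section LipschitzMargin

open Metric
open scoped NNReal

variable {X : Type*} [PseudoMetricSpace X] {x : X} {ε : ℝ}

theorem pos_on_closedBall_of_lipschitzOnWith {g : X → ℝ} {L : ℝ≥0}
    (hg : LipschitzOnWith L g (closedBall x ε)) (hx : L * ε < g x) :
    ∀ x' ∈ closedBall x ε, 0 < g x' := by
  intro x' hx'
  have hε : 0 ≤ ε := nonneg_of_mem_closedBall hx'
  have hdrop : g x ≤ g x' + L * ε :=
    calc
      g x ≤ g x' + L * dist x x' := hg.le_add_mul (mem_closedBall_self hε) hx'
      _ ≤ g x' + L * ε := by gcongr; exact mem_closedBall'.1 hx'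
  linarith

theorem gloro_local_robustness_general {ι : Type*} {f : X → ι → ℝ} {K : ι → ℝ≥0} {j : ι}
    (hLip : ∀ i, LipschitzOnWith (K i) (f · i) (closedBall x ε))
    (hcert : ∀ i, i ≠ j → f x i + (K i + K j) * ε < f x j) :
    ∀ x' ∈ closedBall x ε, ∀ i, i ≠ j → f x' i < f x' j := by
  intro x' hx' i hij
  have hmargin : LipschitzOnWith (K j + K i) (fun y ↦ f y j - f y i) (closedBall x ε) :=
    (hLip j).sub (hLip i)
  have hmargin_center : ↑(K j + K i) * ε < f x j - f x i := by
    rw [lt_sub_iff_add_lt', NNReal.coe_add, add_comm (K j : ℝ)]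
    exact hcert i hij
  exact sub_pos.1 (pos_on_closedBall_of_lipschitzOnWith hmargin hmargin_center x' hx')

end LipschitzMargin

theorem gloro_local_robustness
    {E : Type*} [NormedAddCommGroup E] [NormedSpace ℝ E]
    {m : ℕ} (hm : 1 ≤ m) (f : E → Fin m → ℝ)
    (ε : ℝ) (hε : 0 ≤ ε)
    (K : Fin m → ℝ) (hK : ∀ i, 0 ≤ K i)
    (hLip : ∀ i : Fin m, ∀ x₁ x₂ : E, |f x₁ i - f x₂ i| ≤ K i * ‖x₁ - x₂‖)
    (x : E) (j : Fin m)
    (hcert : ∀ i : Fin m, i ≠ j → f x j > f x i + (K i + K j) * ε) :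
    ∀ x' : E, ‖x - x'‖ ≤ ε → ∀ i : Fin m, i ≠ j → f x' j > f x' i := by
  lift K to Fin m → NNReal using hK
  have hLipOn (i : Fin m) : LipschitzOnWith (K i) (f · i) (Metric.closedBall x ε) :=
    .of_dist_le_mul fun x₁ _ x₂ _ ↦ by
      simpa only [dist_eq_norm, Real.norm_eq_abs] using hLip i x₁ x₂
  exact fun x' hx' ↦
    gloro_local_robustness_general hLipOn hcert x' (mem_closedBall_iff_norm'.2 hx')
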